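/- Let h = a𝐞 + b𝐢 + c𝐣 + d𝐤 ∈ 𝔻 (a,b,c,d ∈ ℝ) and let u ∈ 𝔻 be unimodular, i.e., u♭u = 𝐞 where u♭ = 𝐢⁻¹u†𝐢. Then u♭hu ∈ 𝔻, and writing u♭hu = a'𝐞 + b'𝐢 + c'𝐣 + d'𝐤 with a',b',c',d' ∈ ℝ, the quantities a' = a and −b'² + c'² + d'² = −b² + c² + d² are invariant. Moreover, if A is a square 𝔻-matrix, v a 𝔻-vector and h ∈ 𝔻 satisfy the right-eigenvalue equation A·v = v·h, then A·(vu) = (vu)·(u♭hu), so u♭hu is also a right eigenvalue of A. -/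

import Mathlib

open Matrix Complex

/-- `Δ(α,β) = [[α, β],[β̄, ᾱ]]`. -/
noncomputable def Delta (α β : ℂ) : Matrix (Fin 2) (Fin 2) ℂ :=
  !![α, β; starRingEnd ℂ β, starRingEnd ℂ α]

/-- The set `𝔻` of all matrices of the form `Δ(α,β)`. -/
noncomputable def Dset : Set (Matrix (Fin 2) (Fin 2) ℂ) :=
  {p | ∃ α β : ℂ, p = Delta α β}

/-- The ♭-conjugate `p♭ = 𝐢⁻¹ p† 𝐢`, where `𝐢 = Δ(i,0)`. -/
noncomputable def flat (p : Matrix (Fin 2) (Fin 2) ℂ) : Matrix (Fin 2) (Fin 2) ℂ :=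
  (Delta Complex.I 0)⁻¹ * pᴴ * Delta Complex.I 0

/-!
Conjugation by `u`, with inverse `u♭`, preserves the trace and the determinant. On
`Δ(α,β)` these are `2 Re α` and `|α|² - |β|²`, i.e. `2a` and `a² - C` for the invariants `a` and
`C = -b² + c² + d²`.
-/

theorem Delta_mul_Delta (α β γ δ : ℂ) :
    Delta α β * Delta γ δ =
      Delta (α * γ + β * starRingEnd ℂ δ) (α * δ + β * starRingEnd ℂ γ) := by
  simp [Delta, add_comm]

theorem conjTranspose_Delta (α β : ℂ) : (Delta α β)ᴴ = Delta (starRingEnd ℂ α) β := by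
  ext i j
  fin_cases i <;> fin_cases j <;> simp [Delta]

theorem inv_Delta_I_zero : (Delta I 0)⁻¹ = Delta (-I) 0 := by
  apply Matrix.inv_eq_left_inv
  simp [Delta, Matrix.one_fin_two]

theorem flat_Delta (α β : ℂ) : flat (Delta α β) = Delta (starRingEnd ℂ α) (-β) := by
  rw [flat, inv_Delta_I_zero, conjTranspose_Delta, Delta_mul_Delta, Delta_mul_Delta]
  congr 1
  · simp only [map_zero, mul_zero, zero_mul, add_zero]
    linear_combination -starRingEnd ℂ α * I_mul_I
  · simp only [conj_I, mul_zero, zero_mul, add_zero, zero_add]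
    linear_combination β * I_mul_I

theorem mul_mem_Dset {p q : Matrix (Fin 2) (Fin 2) ℂ} (hp : p ∈ Dset) (hq : q ∈ Dset) :
    p * q ∈ Dset := by
  obtain ⟨α, β, rfl⟩ := hp
  obtain ⟨γ, δ, rfl⟩ := hq
  exact ⟨_, _, Delta_mul_Delta α β γ δ⟩

theorem flat_mem_Dset {p : Matrix (Fin 2) (Fin 2) ℂ} (hp : p ∈ Dset) : flat p ∈ Dset := by
  obtain ⟨α, β, rfl⟩ := hp
  exact ⟨_, _, flat_Delta α β⟩

theorem basis_combination_eq_Delta (a b c d : ℝ) :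
    a • Delta 1 0 + b • Delta I 0 + c • Delta 0 1 + d • Delta 0 I = Delta ⟨a, b⟩ ⟨c, d⟩ := by
  ext i j
  fin_cases i <;> fin_cases j <;> simp [Delta, Complex.ext_iff]

theorem trace_Delta (α β : ℂ) : (Delta α β).trace = (2 * α.re : ℝ) := by
  rw [Delta, Matrix.trace_fin_two_of, add_conj]

theorem det_Delta (α β : ℂ) : (Delta α β).det = (normSq α - normSq β : ℝ) := by
  rw [Delta, Matrix.det_fin_two_of, mul_conj, mul_conj, ofReal_sub]

theorem re_eq_of_mul_Delta_mul_eq_Delta {p q : Matrix (Fin 2) (Fin 2) ℂ} (hqp : q * p = 1)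
    {α β α' β' : ℂ} (hconj : p * Delta α β * q = Delta α' β') : α'.re = α.re := by
  have htrace : (Delta α' β').trace = (Delta α β).trace := by
    rw [← hconj, Matrix.trace_mul_cycle, hqp, Matrix.one_mul]
  rw [trace_Delta, trace_Delta, ofReal_inj] at htrace
  exact mul_left_cancel₀ two_ne_zero htrace

theorem normSq_sub_normSq_eq_of_mul_Delta_mul_eq_Delta {p q : Matrix (Fin 2) (Fin 2) ℂ}
    (hqp : q * p = 1) {α β α' β' : ℂ} (hconj : p * Delta α β * q = Delta α' β') :
    normSq α' - normSq β' = normSq α - normSq β := by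
  have hdet : (Delta α' β').det = (Delta α β).det := by
    rw [← hconj, Matrix.det_conj_of_mul_eq_one (mul_eq_one_comm.mp hqp) hqp]
  rwa [det_Delta, det_Delta, ofReal_inj] at hdet

theorem mul_eq_mul_conj_of_mul_eq_mul {m n k R : Type*} [Fintype m] [Fintype n] [Fintype k]
    [DecidableEq n] [Semiring R] {A : Matrix m m R} {v : Matrix m n R} {h : Matrix n n R}
    {u : Matrix n k R} {w : Matrix k n R} (hA : A * v = v * h) (huw : u * w = 1) :
    A * (v * u) = (v * u) * (w * h * u) := by
  calc
    A * (v * u) = v * h * u := by rw [← Matrix.mul_assoc, hA]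
    _ = v * (u * w) * h * u := by rw [huw, Matrix.mul_one]
    _ = (v * u) * (w * h * u) := by simp only [Matrix.mul_assoc]

/-- Unimodular equivalence of right eigenvalues: for `h = a𝐞+b𝐢+c𝐣+d𝐤 ∈ 𝔻` and a
unimodular `u ∈ 𝔻` (`u♭u = 𝐞`), the transform `u♭hu` lies in `𝔻`, has the same
invariants `a` and `−b²+c²+d²`, and whenever `A·v = v·h` (right-eigenvalue equation for a
`𝔻`-matrix `A` and a `𝔻`-vector `v`) one also has `A·(vu) = (vu)·(u♭hu)`. -/
theorem right_eigenvalue_unimodular_equivalence (a b c d : ℝ)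
    (h u : Matrix (Fin 2) (Fin 2) ℂ)
    (hh : h = a • Delta 1 0 + b • Delta Complex.I 0 + c • Delta 0 1 + d • Delta 0 Complex.I)
    (hu : u ∈ Dset) (huni : flat u * u = 1) :
    flat u * h * u ∈ Dset ∧
      (∀ a' b' c' d' : ℝ,
        flat u * h * u =
            a' • Delta 1 0 + b' • Delta Complex.I 0 + c' • Delta 0 1 + d' • Delta 0 Complex.I →
          a' = a ∧ -b' ^ 2 + c' ^ 2 + d' ^ 2 = -b ^ 2 + c ^ 2 + d ^ 2) ∧
      ∀ (n : ℕ) (A : Matrix (Fin (2 * n)) (Fin (2 * n)) ℂ)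
        (v : Matrix (Fin (2 * n)) (Fin 2) ℂ),
        A * v = v * h → A * (v * u) = (v * u) * (flat u * h * u) := by
  have huni' : u * flat u = 1 := mul_eq_one_comm.mp huni
  rw [basis_combination_eq_Delta] at hh
  have hmem : h ∈ Dset := ⟨_, _, hh⟩
  refine ⟨mul_mem_Dset (mul_mem_Dset (flat_mem_Dset hu) hmem) hu, ?_, ?_⟩
  · intro a' b' c' d' hconj
    rw [hh, basis_combination_eq_Delta] at hconj
    have ha : a' = a := re_eq_of_mul_Delta_mul_eq_Delta huni' hconj
    have hnorm := normSq_sub_normSq_eq_of_mul_Delta_mul_eq_Delta huni' hconj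
    simp only [normSq_mk, ha] at hnorm
    exact ⟨ha, by linarith⟩
  · intro n A v hA
    exact mul_eq_mul_conj_of_mul_eq_mul hA huni'
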